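/- For every n : ℕ, every target function f : (Fin n → Bool) → Bool, and every k ≥ 1: for all u ∈ (Fin n → Bool) with w_H(u) ≤ k − 1 and all s ≥ k, the learning algorithm's coefficients satisfy g^(s)(u) = g^(k)(u). That is, after the k-th update, the gates controlled by at most k − 1 qubits are never updated again. -/

import Mathlib

instance : Std.Commutative (α := Bool) xor := ⟨Bool.xor_comm⟩
instance : Std.Associative (α := Bool) xor := ⟨Bool.xor_assoc⟩

/-- XOR of the Boolean values `f a` over a finite set `s`. -/
def xorSum {α : Type*} (s : Finset α) (f : α → Bool) : Bool :=
  s.fold xor false f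

/-- The Boolean monomial: `m_u(x) = true` iff `x i = true` for every `i` with `u i = true`. -/
def mGate (n : ℕ) (u x : Fin n → Bool) : Bool :=
  decide (∀ i, u i = true → x i = true)

/-- The Hamming weight `w_H(u) = |1_u|` of a bit string. -/
def hammingWeight (n : ℕ) (u : Fin n → Bool) : ℕ :=
  (Finset.univ.filter fun i => u i = true).card

/-- The output `h_g(x)` of the network with coefficient function `g`:
the XOR over all `u` of `g u AND m_u(x)`. -/
def netOut (n : ℕ) (g : (Fin n → Bool) → Bool) (x : Fin n → Bool) : Bool :=
  xorSum Finset.univ fun u : Fin n → Bool => g u && mGate n u x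

/-- The sequence of coefficient functions produced by the learning algorithm for the
target function `f`: `g⁽⁰⁾` is constant false, and `g⁽ᵏ⁺¹⁾` flips `g⁽ᵏ⁾` exactly on the
erroneous inputs `E⁽ᵏ⁾ = {x | h_{g⁽ᵏ⁾}(x) ≠ f(x)}`. -/
def gSeq (n : ℕ) (f : (Fin n → Bool) → Bool) : ℕ → ((Fin n → Bool) → Bool)
  | 0 => fun _ => false
  | k + 1 => fun u =>
      if netOut n (gSeq n f k) u ≠ f u then !(gSeq n f k u) else gSeq n f k u

/-!
The output at `x` is the coefficient at `x` XOR the coefficients strictly below `x` in the pointwise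
order. If all inputs below `x` are already correct, an update leaves the coefficients below `x`
unchanged and flips the coefficient at `x` exactly when the output at `x` is wrong, so it makes the
output at `x` correct. Since the Hamming weight is strictly monotone, after `k` updates every input
of weight less than `k` is correct, and a coefficient is updated only at an incorrect input.
-/

theorem xorSum_eq_xor_erase {α : Type*} [DecidableEq α] {s : Finset α} {a : α} (ha : a ∈ s)
    (f : α → Bool) : xorSum s f = xor (f a) (xorSum (s.erase a) f) := by
  conv_lhs => rw [← Finset.insert_erase ha]
  exact Finset.fold_insert (Finset.notMem_erase a s)

section

variable {n : ℕ}

theorem mGate_eq_true_iff_le {u x : Fin n → Bool} : mGate n u x = true ↔ u ≤ x := by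
  simp only [mGate, decide_eq_true_eq, Pi.le_def, Bool.le_iff_imp]

theorem hammingWeight_strictMono : StrictMono (hammingWeight n) := by
  intro u x hux
  obtain ⟨hle, i, hi⟩ := Pi.lt_def.mp hux
  obtain ⟨hui, hxi⟩ := Bool.lt_iff.mp hi
  have support_subset : (Finset.univ.filter fun j => u j = true) ⊆
      Finset.univ.filter fun j => x j = true :=
    Finset.monotone_filter_right _ fun j _ => Bool.le_iff_imp.mp (hle j)
  refine Finset.card_lt_card ((Finset.ssubset_iff_of_subset support_subset).mpr ⟨i, ?_, ?_⟩)
  · exact (Finset.mem_filter_univ i).mpr hxi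
  · simp only [Finset.mem_filter_univ, hui, Bool.false_eq_true, not_false_eq_true]

theorem netOut_xor_apply (g : (Fin n → Bool) → Bool) (x : Fin n → Bool) :
    xor (netOut n g x) (g x) = xorSum (Finset.univ.erase x) fun u => g u && mGate n u x := by
  rw [netOut, xorSum_eq_xor_erase (Finset.mem_univ x), mGate_eq_true_iff_le.mpr le_rfl,
    Bool.and_true, Bool.xor_comm, ← Bool.xor_assoc, Bool.xor_self, Bool.false_xor]

theorem netOut_xor_apply_congr {g g' : (Fin n → Bool) → Bool} {x : Fin n → Bool}
    (h : ∀ u < x, g u = g' u) :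
    xor (netOut n g x) (g x) = xor (netOut n g' x) (g' x) := by
  rw [netOut_xor_apply, netOut_xor_apply]
  refine Finset.fold_congr fun u hu => ?_
  by_cases hux : mGate n u x = true
  · rw [h u ((mGate_eq_true_iff_le.mp hux).lt_of_ne (Finset.ne_of_mem_erase hu))]
  · rw [Bool.eq_false_of_not_eq_true hux, Bool.and_false, Bool.and_false]

variable {f : (Fin n → Bool) → Bool} {k : ℕ}

theorem gSeq_succ_eq_of_netOut_eq {u : Fin n → Bool} (h : netOut n (gSeq n f k) u = f u) :
    gSeq n f (k + 1) u = gSeq n f k u :=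
  if_neg (not_not.mpr h)

theorem gSeq_succ_eq_not_of_netOut_ne {u : Fin n → Bool} (h : netOut n (gSeq n f k) u ≠ f u) :
    gSeq n f (k + 1) u = !gSeq n f k u :=
  if_pos h

theorem gSeq_succ_apply (u : Fin n → Bool) :
    gSeq n f (k + 1) u = xor (f u) (xor (netOut n (gSeq n f k) u) (gSeq n f k u)) := by
  rw [← Bool.xor_assoc]
  by_cases h : netOut n (gSeq n f k) u = f u
  · rw [gSeq_succ_eq_of_netOut_eq h, h, Bool.xor_self, Bool.false_xor]
  · rw [gSeq_succ_eq_not_of_netOut_ne h, Bool.eq_not.mpr h, Bool.xor_not_self, Bool.true_xor]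

theorem netOut_gSeq_succ_eq_of_forall_lt {x : Fin n → Bool}
    (h : ∀ u < x, netOut n (gSeq n f k) u = f u) :
    netOut n (gSeq n f (k + 1)) x = f x := by
  rw [← Bool.xor_left_inj (z := gSeq n f (k + 1) x)]
  calc xor (netOut n (gSeq n f (k + 1)) x) (gSeq n f (k + 1) x)
      = xor (netOut n (gSeq n f k) x) (gSeq n f k x) :=
        netOut_xor_apply_congr fun u hu => gSeq_succ_eq_of_netOut_eq (h u hu)
    _ = xor (f x) (gSeq n f (k + 1) x) := by
        rw [gSeq_succ_apply, ← Bool.xor_assoc (f x), Bool.xor_self, Bool.false_xor]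

theorem netOut_gSeq_eq_of_hammingWeight_lt {x : Fin n → Bool} (hx : hammingWeight n x < k) :
    netOut n (gSeq n f k) x = f x := by
  induction k generalizing x with
  | zero => exact absurd hx (Nat.not_lt_zero _)
  | succ k ih =>
    refine netOut_gSeq_succ_eq_of_forall_lt fun u hux => ih ?_
    exact (hammingWeight_strictMono hux).trans_le (Nat.le_of_lt_succ hx)

end

/-- after the `k`-th update (`k ≥ 1`), the gates controlled by at most
`k - 1` qubits are never updated again: for `w_H(u) ≤ k - 1` and `s ≥ k`,
`g⁽ˢ⁾(u) = g⁽ᵏ⁾(u)`. -/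
theorem low_weight_gates_stable (n : ℕ) (f : (Fin n → Bool) → Bool)
    (k : ℕ) (hk : 1 ≤ k) (u : Fin n → Bool) (hu : hammingWeight n u ≤ k - 1)
    (s : ℕ) (hs : k ≤ s) :
    gSeq n f s u = gSeq n f k u := by
  induction s, hs using Nat.le_induction with
  | base => rfl
  | succ s hs ih =>
    have hus : hammingWeight n u < s := by omega
    exact (gSeq_succ_eq_of_netOut_eq (netOut_gSeq_eq_of_hammingWeight_lt hus)).trans ih
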